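/- arXiv:1604.06329 — 2 statements merged into one kernel-verified Lean document; each statement's English description precedes it below -/
import Mathlib

section
/- Let (X, d) be a totally bounded (precompact) metric space, I a finite nonempty set, q : X × I → X a deterministic commutative transition such that q(·,i) is 1-Lipschitz for every i ∈ I, and g : X × I → [0,1] a payoff function such that g(·,i) is uniformly continuous for every i ∈ I. Then for every x₁ ∈ X there exist a real number v* and a pure strategy a ∈ I^ℕ such that limsup_{n→∞} v_n(x₁) ≤ v* and lim_{n→∞} γ_n(x₁, a) = v*; in particular the MDP starting at x₁ has uniform value v* in pure strategies and a is a pure 0-optimal strategy. -/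
open Filter Topology

noncomputable section

/-- The play induced by an initial state `x₁` and a pure strategy `a` in a deterministic MDP:
`x₀ = x₁` and `x_{t+1} = q (x_t) (a t)`. -/
def play {X I : Type*} (q : X → I → X) (x₁ : X) (a : ℕ → I) : ℕ → X
  | 0 => x₁
  | t + 1 => q (play q x₁ a t) (a t)

/-- The `n`-stage average payoff `γ_n(x₁, a)`. -/
def payoff {X I : Type*} (q : X → I → X) (g : X → I → ℝ) (x₁ : X) (a : ℕ → I) (n : ℕ) : ℝ :=
  (1 / (n : ℝ)) * ∑ t ∈ Finset.range n, g (play q x₁ a t) (a t)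

/-- The `n`-stage value `v_n(x₁)`. -/
def nValue {X I : Type*} (q : X → I → X) (g : X → I → ℝ) (x₁ : X) (n : ℕ) : ℝ :=
  ⨆ a : ℕ → I, payoff q g x₁ a n

/-- The MDP starting at `x₁` has a uniform value `v` in pure strategies. -/
def HasUniformValuePure {X I : Type*} (q : X → I → X) (g : X → I → ℝ) (x₁ : X) (v : ℝ) : Prop :=
  (∀ ε > (0 : ℝ), ∃ a : ℕ → I, v - ε ≤ liminf (fun n => payoff q g x₁ a n) atTop) ∧
    limsup (fun n => nValue q g x₁ n) atTop ≤ v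

/-! A play whose long-run average is close to the limsup of the values has a stage from which all
later averages over a long horizon are good; compactness turns such stages into strategies
guaranteeing every rate below that limsup. It remains to chain these strategies, each resumed from
where the previous one was left. By commutativity the state depends only on the multiset of
actions used, and by total boundedness commuting nonexpansive maps are uniformly recurrent. Hence
a strategy can be resumed after any multiset of actions, provided no action that it uses finitely
often has been used more often than that. The numbers of uses form points of `I → ℕ∞`, so by
Dickson's lemma they may be assumed to increase along the sequence of strategies, which keeps
every resumption possible. -/

section Strategies

variable {X I : Type*} {q : X → I → X} {g : X → I → ℝ} {x : X} {a b A c : ℕ → I} {m n : ℕ}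

/-- The unnormalised payoff `n * γ_n(x, a)` of the first `n` stages. -/
def totalPayoff (q : X → I → X) (g : X → I → ℝ) (x : X) (a : ℕ → I) (n : ℕ) : ℝ :=
  ∑ t ∈ Finset.range n, g (play q x a t) (a t)

/-- The strategy that follows `A` during the first `m` stages and then restarts with `c`. -/
def concat (m : ℕ) (A c : ℕ → I) : ℕ → I := fun t => if t < m then A t else c (t - m)

/-- The multiset of the first `t` actions of a strategy. Under a commutative transition it
determines the state reached at time `t`. -/
def used (a : ℕ → I) (t : ℕ) : Multiset I := (Multiset.range t).map a

lemma payoff_eq_totalPayoff_div : payoff q g x a n = totalPayoff q g x a n / n := by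
  rw [payoff, totalPayoff, one_div_mul_eq_div]

lemma play_congr (h : ∀ t < n, a t = b t) : play q x a n = play q x b n := by
  induction n with
  | zero => rfl
  | succ n ih => rw [play, play, ih fun t ht => h t (ht.trans n.lt_succ_self), h n n.lt_succ_self]

lemma totalPayoff_congr (h : ∀ t < n, a t = b t) :
    totalPayoff q g x a n = totalPayoff q g x b n := by
  refine Finset.sum_congr rfl fun t ht => ?_
  have htn := Finset.mem_range.1 ht
  rw [play_congr fun s hs => h s (hs.trans htn), h t htn]

lemma used_congr (h : ∀ t < n, a t = b t) : used a n = used b n :=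
  Multiset.map_congr rfl fun t ht => h t (Multiset.mem_range.1 ht)

lemma play_add (x : X) (a : ℕ → I) (m n : ℕ) :
    play q x a (m + n) = play q (play q x a m) (fun t => a (m + t)) n := by
  induction n with
  | zero => rfl
  | succ n ih => rw [← add_assoc, play, play, ih]

lemma totalPayoff_add (x : X) (a : ℕ → I) (m n : ℕ) :
    totalPayoff q g x a (m + n) =
      totalPayoff q g x a m + totalPayoff q g (play q x a m) (fun t => a (m + t)) n := by
  simp only [totalPayoff, Finset.sum_range_add, play_add]

lemma used_add (a : ℕ → I) (m n : ℕ) :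
    used a (m + n) = used a m + used (fun t => a (m + t)) n := by
  simp only [used, Multiset.range_add, Multiset.map_add, Multiset.map_map, Function.comp_def]

lemma used_mono (a : ℕ → I) : Monotone (used a) := fun m n h => by
  obtain ⟨k, rfl⟩ := Nat.exists_eq_add_of_le h
  exact used_add a m k ▸ Multiset.le_add_right _ _

lemma concat_of_lt {t : ℕ} (h : t < m) : concat m A c t = A t := if_pos h

lemma concat_add (m : ℕ) (A c : ℕ → I) (t : ℕ) : concat m A c (m + t) = c t := by
  simp [concat]

lemma play_concat (x : X) (m : ℕ) (A c : ℕ → I) (n : ℕ) :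
    play q x (concat m A c) (m + n) = play q (play q x A m) c n := by
  simp only [play_add, concat_add, play_congr fun _ => concat_of_lt (A := A) (c := c)]

lemma totalPayoff_concat (x : X) (m : ℕ) (A c : ℕ → I) (n : ℕ) :
    totalPayoff q g x (concat m A c) (m + n) =
      totalPayoff q g x A m + totalPayoff q g (play q x A m) c n := by
  simp only [totalPayoff_add, concat_add, play_congr fun _ => concat_of_lt (A := A) (c := c),
    totalPayoff_congr fun _ => concat_of_lt (A := A) (c := c)]

lemma used_concat (m : ℕ) (A c : ℕ → I) (n : ℕ) :
    used (concat m A c) (m + n) = used A m + used c n := by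
  simp only [used_add, concat_add, used_congr fun _ => concat_of_lt (A := A) (c := c)]

lemma exists_used_card_eq [Nonempty I] (s : Multiset I) : ∃ A : ℕ → I, used A s.card = s := by
  induction s using Multiset.induction_on with
  | empty => exact ⟨fun _ => Classical.arbitrary I, rfl⟩
  | cons i s ih =>
    obtain ⟨A, hA⟩ := ih
    refine ⟨concat s.card A fun _ => i, ?_⟩
    rw [Multiset.card_cons, used_concat, hA, add_comm]
    rfl

lemma play_eq_foldl_used [RightCommutative q] (x : X) (a : ℕ → I) (t : ℕ) :
    play q x a t = (used a t).foldl q x := by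
  induction t with
  | zero => rfl
  | succ t ih => rw [used_add, Multiset.foldl_add, ← ih]; rfl

lemma exists_strategy_of_forall_prefix [Finite I] {Q : ℕ → (ℕ → I) → Prop}
    (hQ : ∀ n a b, (∀ t < n, a t = b t) → Q n a → Q n b)
    (h : ∀ N, ∃ a, ∀ n ≤ N, Q n a) : ∃ a, ∀ n, Q n a := by
  choose a ha using h
  have hlim : ∀ t, ∃ i, ∀ᶠ N in (hyperfilter ℕ : Filter ℕ), a N t = i := fun t =>
    Ultrafilter.eventually_exists_iff.1 (Eventually.of_forall fun N => ⟨a N t, rfl⟩)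
  choose c hc using hlim
  refine ⟨c, fun n => ?_⟩
  have hprefix : ∀ᶠ N in (hyperfilter ℕ : Filter ℕ), ∀ t ∈ Set.Iio n, a N t = c t :=
    (Set.finite_Iio n).eventually_all.2 fun t _ => hc t
  have hlarge : ∀ᶠ N in (hyperfilter ℕ : Filter ℕ), n ≤ N :=
    Nat.hyperfilter_le_atTop (eventually_ge_atTop n)
  obtain ⟨N, hNc, hN⟩ := (hprefix.and hlarge).exists
  exact hQ n (a N) c hNc (ha N n hN)

end Strategies

section Guarantees

variable {X I : Type*} {q : X → I → X} {g : X → I → ℝ} {x : X} {a : ℕ → I} {w w' K K' B : ℝ}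

/-- Along the play of `a` from `x`, the payoff accumulated by time `n` is at least `n * w`, up to
a loss `K` that does not depend on `n`. -/
def Guarantees (q : X → I → X) (g : X → I → ℝ) (x : X) (a : ℕ → I) (w K : ℝ) : Prop :=
  ∀ n : ℕ, n * w - K ≤ totalPayoff q g x a n

namespace Guarantees

lemma nonneg (h : Guarantees q g x a w K) : 0 ≤ K := by
  simpa [totalPayoff] using h 0

lemma mono (h : Guarantees q g x a w K) (hw : w' ≤ w) (hK : K ≤ K') :
    Guarantees q g x a w' K' := fun n => by
  have := mul_le_mul_of_nonneg_left hw n.cast_nonneg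
  linarith [h n]

lemma eventually_lt_payoff (h : Guarantees q g x a w K) (hw : w' < w) :
    ∀ᶠ n in atTop, w' < payoff q g x a n := by
  have hlarge : ∀ᶠ n : ℕ in atTop, K < n * (w - w') :=
    (tendsto_natCast_atTop_atTop.atTop_mul_const (sub_pos.2 hw)).eventually_gt_atTop K
  filter_upwards [hlarge, eventually_gt_atTop 0] with n hn hpos
  rw [payoff_eq_totalPayoff_div, lt_div_iff₀ (Nat.cast_pos.2 hpos)]
  linarith [h n]

lemma exists_of_eventually (h : ∀ᶠ n : ℕ in atTop, n * w - K ≤ totalPayoff q g x a n) :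
    ∃ K', Guarantees q g x a w K' := by
  have hbdd : IsBoundedUnder (· ≤ ·) atTop fun n : ℕ => n * w - totalPayoff q g x a n :=
    isBoundedUnder_of_eventually_le (h.mono fun n hn => sub_le_comm.1 hn)
  obtain ⟨K', hK'⟩ := hbdd.bddAbove_range
  exact ⟨K', fun n => sub_le_comm.1 (hK' ⟨n, rfl⟩)⟩

end Guarantees

lemma abs_totalPayoff_le (hg : ∀ x i, |g x i| ≤ B) (x : X) (a : ℕ → I) (n : ℕ) :
    |totalPayoff q g x a n| ≤ n * B := by
  refine (Finset.abs_sum_le_sum_abs _ _).trans ?_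
  simpa using Finset.sum_le_card_nsmul (Finset.range n) _ B fun t _ => hg (play q x a t) (a t)

lemma abs_mul_sub_totalPayoff_le (hg : ∀ x i, |g x i| ≤ B) (w : ℝ) (x : X) (a : ℕ → I) (n : ℕ) :
    |n * w - totalPayoff q g x a n| ≤ n * (B + |w|) := by
  have hw : |n * w| = n * |w| := by rw [abs_mul, Nat.abs_cast]
  linarith [abs_sub (n * w) (totalPayoff q g x a n), abs_totalPayoff_le (q := q) hg x a n]

lemma Guarantees.of_play (hg : ∀ x i, |g x i| ≤ B) {A c : ℕ → I} {m : ℕ}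
    (h : Guarantees q g (play q x A m) c w K) :
    Guarantees q g x (concat m A c) w (K + m * (B + |w|)) := fun n => by
  rcases le_total n m with hnm | hmn
  · have hB : 0 ≤ B + |w| := add_nonneg ((abs_nonneg _).trans (hg x (A 0))) (abs_nonneg w)
    have hle : (n : ℝ) * (B + |w|) ≤ m * (B + |w|) := by gcongr
    linarith [h.nonneg, (abs_le.1 (abs_mul_sub_totalPayoff_le (q := q) hg w x
      (concat m A c) n)).2]
  · obtain ⟨k, rfl⟩ := Nat.exists_eq_add_of_le hmn
    rw [totalPayoff_concat]
    push_cast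
    linarith [h k, (abs_le.1 (abs_mul_sub_totalPayoff_le (q := q) hg w x A m)).2]

lemma Guarantees.tail (hg : ∀ x i, |g x i| ≤ B) (h : Guarantees q g x a w K) (m : ℕ) :
    Guarantees q g (play q x a m) (fun t => a (m + t)) w (K + m * (B + |w|)) := fun n => by
  have hmn := h (m + n)
  rw [totalPayoff_add] at hmn
  push_cast at hmn
  linarith [(abs_le.1 (abs_mul_sub_totalPayoff_le (q := q) hg w x a m)).1]

end Guarantees

section Nonexpansive

variable {X I : Type*} [PseudoMetricSpace X] {q : X → I → X} {g : X → I → ℝ}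

lemma dist_play_le (hLip : ∀ i, LipschitzWith 1 fun x => q x i) (a : ℕ → I) (x y : X) (t : ℕ) :
    dist (play q x a t) (play q y a t) ≤ dist x y := by
  induction t with
  | zero => exact le_rfl
  | succ t ih => exact ((hLip (a t)).dist_le_mul _ _).trans (by simpa using ih)

lemma lipschitzWith_foldl [RightCommutative q] (hLip : ∀ i, LipschitzWith 1 fun x => q x i)
    (s : Multiset I) : LipschitzWith 1 fun x => s.foldl q x := by
  induction s using Multiset.induction_on with
  | empty => exact LipschitzWith.id
  | cons i s ih => simpa [Function.comp_def] using ih.comp (hLip i)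

lemma exists_pos_totalPayoff_sub_le [Finite I] (hLip : ∀ i, LipschitzWith 1 fun x => q x i)
    (hgu : ∀ i, UniformContinuous fun x => g x i) {η : ℝ} (hη : 0 < η) :
    ∃ δ > 0, ∀ x y, dist x y < δ → ∀ a n,
      totalPayoff q g y a n - n * η ≤ totalPayoff q g x a n := by
  obtain ⟨δ, hδ, hmod⟩ :=
    Metric.uniformEquicontinuous_iff.1 (uniformEquicontinuous_finite.2 hgu) η hη
  refine ⟨δ, hδ, fun x y hxy a n => ?_⟩
  have hstage : ∀ t ∈ Finset.range n, g (play q y a t) (a t) - η ≤ g (play q x a t) (a t) :=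
    fun t _ => by
      have := hmod _ _ ((dist_play_le hLip a x y t).trans_lt hxy) (a t)
      rw [Real.dist_eq] at this
      linarith [(abs_lt.1 this).1]
  simpa [totalPayoff, Finset.sum_sub_distrib] using Finset.sum_le_sum hstage

lemma exists_forall_abs_le [Finite I] (hX : TotallyBounded (Set.univ : Set X))
    (hgu : ∀ i, UniformContinuous fun x => g x i) : ∃ B, ∀ x i, |g x i| ≤ B := by
  have hbdd : ∀ i, ∀ᶠ B in atTop, ∀ x, |g x i| ≤ B := fun i => by
    obtain ⟨B, hB⟩ := (hX.image (hgu i)).isBounded.exists_norm_le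
    filter_upwards [eventually_ge_atTop B] with B' hB' x
    exact (hB _ ⟨x, Set.mem_univ x, rfl⟩).trans hB'
  obtain ⟨B, hB⟩ := (eventually_all.2 hbdd).exists
  exact ⟨B, fun x i => hB i x⟩

end Nonexpansive

section AlmostOptimal

/-- At a time `t₀ ≤ n` minimising the partial sums all later windows are nonnegative; since the
total exceeds `M * B`, this minimum is not attained during the last `M` stages. -/
lemma exists_forall_le_sum_window_nonneg {f : ℕ → ℝ} {B : ℝ} (hB : 0 ≤ B) (hf : ∀ t, f t ≤ B)
    {M n : ℕ} (h : M * B < ∑ t ∈ Finset.range n, f t) :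
    ∃ t₀, ∀ m ≤ M, 0 ≤ ∑ t ∈ Finset.range m, f (t₀ + t) := by
  obtain ⟨t₀, ht₀, hmin⟩ := Finset.exists_min_image (Finset.range (n + 1))
    (fun k => ∑ t ∈ Finset.range k, f t) ⟨0, by simp⟩
  obtain ⟨l, rfl⟩ := Nat.exists_eq_add_of_le (Nat.le_of_lt_succ (Finset.mem_range.1 ht₀))
  have hlast : ∑ t ∈ Finset.range l, f (t₀ + t) ≤ l * B := by
    simpa using Finset.sum_le_card_nsmul (Finset.range l) _ B fun t _ => hf (t₀ + t)
  have hstart : ∑ t ∈ Finset.range t₀, f t ≤ 0 := by simpa using hmin 0 (by simp)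
  have hMl : M ≤ l := by
    by_contra! hlM
    have : (l : ℝ) * B ≤ M * B := by gcongr
    rw [Finset.sum_range_add] at h
    linarith
  refine ⟨t₀, fun m hm => ?_⟩
  have := hmin (t₀ + m) (by simp only [Finset.mem_range]; omega)
  rw [Finset.sum_range_add] at this
  linarith

variable {X I : Type*} {q : X → I → X} {g : X → I → ℝ} {x : X} {w w' B : ℝ}

lemma exists_start_forall_le_totalPayoff (hg : ∀ x i, |g x i| ≤ B) (hw : w' < w)
    (h : ∃ᶠ n in atTop, ∃ a : ℕ → I, w < payoff q g x a n) (M : ℕ) :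
    ∃ a t₀, ∀ m ≤ M, m * w' ≤ totalPayoff q g (play q x a t₀) (fun t => a (t₀ + t)) m := by
  have hlarge : ∀ᶠ n : ℕ in atTop, M * (B + |w'|) < n * (w - w') :=
    (tendsto_natCast_atTop_atTop.atTop_mul_const (sub_pos.2 hw)).eventually_gt_atTop _
  obtain ⟨n, ⟨⟨a, ha⟩, hn⟩, hpos⟩ :=
    ((h.and_eventually hlarge).and_eventually (eventually_gt_atTop 0)).exists
  rw [payoff_eq_totalPayoff_div, lt_div_iff₀ (Nat.cast_pos.2 hpos)] at ha
  have hB : 0 ≤ B + |w'| := add_nonneg ((abs_nonneg _).trans (hg x (a 0))) (abs_nonneg w')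
  obtain ⟨t₀, ht₀⟩ := exists_forall_le_sum_window_nonneg (M := M) (n := n) hB
    (f := fun t => g (play q x a t) (a t) - w')
    (fun t => by linarith [(abs_le.1 (hg (play q x a t) (a t))).2, neg_abs_le w'])
    (by simp only [Finset.sum_sub_distrib, Finset.sum_const, Finset.card_range, nsmul_eq_mul]
        rw [totalPayoff] at ha
        linarith)
  refine ⟨a, t₀, fun m hm => ?_⟩
  have := ht₀ m hm
  simp only [Finset.sum_sub_distrib, Finset.sum_const, Finset.card_range, nsmul_eq_mul,
    play_add] at this
  rw [totalPayoff]
  linarith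

variable [PseudoMetricSpace X] [Finite I]

lemma exists_guarantees_zero_of_forall_horizon (hX : TotallyBounded (Set.univ : Set X))
    (hLip : ∀ i, LipschitzWith 1 fun x => q x i) (hgu : ∀ i, UniformContinuous fun x => g x i)
    {Y : Set X} (hw : w' < w)
    (h : ∀ M : ℕ, ∃ y ∈ Y, ∃ c, ∀ m ≤ M, m * w ≤ totalPayoff q g y c m) :
    ∃ y ∈ Y, ∃ c, Guarantees q g y c w' 0 := by
  suffices hy : ∃ y ∈ Y, ∀ M : ℕ, ∃ c, ∀ m ≤ M, m * w' - 0 ≤ totalPayoff q g y c m by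
    obtain ⟨y, hyY, hy⟩ := hy
    refine ⟨y, hyY, exists_strategy_of_forall_prefix (fun n a b hab ha => ?_) hy⟩
    rwa [← totalPayoff_congr hab]
  by_contra! hbad
  choose! M hM using hbad
  obtain ⟨δ, hδ, hclose⟩ := exists_pos_totalPayoff_sub_le hLip hgu (sub_pos.2 hw)
  obtain ⟨C, hCY, hC, hcov⟩ :=
    Metric.finite_approx_of_totallyBounded (hX.subset (Set.subset_univ Y)) δ hδ
  obtain ⟨y, hyY, c, hc⟩ := h (hC.toFinset.sup M)
  obtain ⟨z, hzC, hyz⟩ := Set.mem_iUnion₂.1 (hcov hyY)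
  obtain ⟨m, hm, hlt⟩ := hM z (hCY hzC) c
  have hle := hclose z y (by rwa [dist_comm]) c m
  linarith [hc m (hm.trans (Finset.le_sup (hC.mem_toFinset.2 hzC)))]

lemma exists_guarantees_of_frequently_lt_payoff (hX : TotallyBounded (Set.univ : Set X))
    (hLip : ∀ i, LipschitzWith 1 fun x => q x i) (hgu : ∀ i, UniformContinuous fun x => g x i)
    (hw : w' < w) (h : ∃ᶠ n in atTop, ∃ a : ℕ → I, w < payoff q g x a n) :
    ∃ b K, Guarantees q g x b w' K := by
  obtain ⟨B, hg⟩ := exists_forall_abs_le hX hgu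
  obtain ⟨u, hwu, huw⟩ := exists_between hw
  obtain ⟨_, ⟨a, t₀, rfl⟩, c, hc⟩ := exists_guarantees_zero_of_forall_horizon
    (Y := {y | ∃ a t, play q x a t = y}) hX hLip hgu hwu fun M => by
      obtain ⟨a, t₀, ha⟩ := exists_start_forall_le_totalPayoff hg huw h M
      exact ⟨_, ⟨a, t₀, rfl⟩, _, ha⟩
  exact ⟨_, _, hc.of_play hg⟩

end AlmostOptimal

section Recurrence

lemma exists_finite_uniform_net {ι X Y : Type*} [PseudoMetricSpace X] [PseudoMetricSpace Y]
    (hX : TotallyBounded (Set.univ : Set X)) (hY : TotallyBounded (Set.univ : Set Y))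
    {f : ι → X → Y} (hf : UniformEquicontinuous f) {ε : ℝ} (hε : 0 < ε) :
    ∃ t : Finset ι, ∀ s, ∃ s' ∈ t, ∀ x, dist (f s x) (f s' x) < ε := by
  obtain ⟨δ, hδ, hmod⟩ := Metric.uniformEquicontinuous_iff.1 hf (ε / 4) (by positivity)
  obtain ⟨C, -, hC, hcovX⟩ := Metric.finite_approx_of_totallyBounded hX δ hδ
  obtain ⟨D, -, hD, hcovY⟩ := Metric.finite_approx_of_totallyBounded hY (ε / 4) (by positivity)
  have hnear (y : Y) : ∃ d : D, dist y d < ε / 4 := by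
    obtain ⟨d, hd, hyd⟩ := Set.mem_iUnion₂.1 (hcovY (Set.mem_univ y))
    exact ⟨⟨d, hd⟩, hyd⟩
  choose d hd using hnear
  have := hC.to_subtype
  have := hD.to_subtype
  let code : ι → C → D := fun s z => d (f s z)
  have hrep (κ : Set.range code) : ∃ s, code s = κ := κ.2
  choose rep hrep using hrep
  refine ⟨(Set.finite_range rep).toFinset, fun s =>
    ⟨rep ⟨code s, s, rfl⟩, by simp, fun x => ?_⟩⟩
  set s' := rep ⟨code s, s, rfl⟩
  obtain ⟨z, hz, hxz⟩ := Set.mem_iUnion₂.1 (hcovX (Set.mem_univ x))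
  have hcode : d (f s' z) = d (f s z) := congrFun (hrep ⟨code s, s, rfl⟩) ⟨z, hz⟩
  calc dist (f s x) (f s' x)
      ≤ dist (f s x) (f s z) + dist (f s z) (f s' z) + dist (f s' z) (f s' x) :=
        dist_triangle4 _ _ _ _
    _ ≤ dist (f s x) (f s z) + (dist (f s z) (d (f s z)) + dist (f s' z) (d (f s z))) +
        dist (f s' z) (f s' x) := by gcongr; exact dist_triangle_right _ _ _
    _ < ε / 4 + (ε / 4 + ε / 4) + ε / 4 := by
        have h₁ := hmod x z hxz s
        have h₂ := hmod x z hxz s'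
        have h₃ := hcode ▸ hd (f s' z)
        rw [dist_comm] at h₂
        gcongr
        exact hd _
    _ = ε := by ring

variable {A X : Type*} [AddCommMonoid A] [PseudoMetricSpace X] {f : A → X → X} {ε : ℝ}

lemma exists_period (hX : TotallyBounded (Set.univ : Set X))
    (hf : ∀ s, LipschitzWith 1 (f s)) (hε : 0 < ε) (s : A) :
    ∃ n p : ℕ, ∀ x, dist (f ((n + (p + 1)) • s) x) (f (n • s) x) < ε := by
  obtain ⟨t, ht⟩ := exists_finite_uniform_net hX hX
    (LipschitzWith.uniformEquicontinuous f 1 hf) (half_pos hε)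
  choose rep hrep hclose using ht
  obtain ⟨n, n', hlt, heq⟩ : ∃ n n' : ℕ, n < n' ∧ rep (n • s) = rep (n' • s) := by
    obtain ⟨n, n', hne, heq⟩ := Finite.exists_ne_map_eq_of_infinite
      fun n : ℕ => (⟨rep (n • s), hrep _⟩ : t)
    have heq := congrArg Subtype.val heq
    rcases hne.lt_or_gt with h | h
    exacts [⟨n, n', h, heq⟩, ⟨n', n, h, heq.symm⟩]
  obtain ⟨p, rfl⟩ := Nat.exists_eq_add_of_lt hlt
  refine ⟨n, p, fun x => ?_⟩
  have h₁ := hclose (n • s) x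
  have h₂ := hclose ((n + p + 1) • s) x
  rw [heq] at h₁
  rw [← add_assoc]
  linarith [dist_triangle_right (f ((n + p + 1) • s) x) (f (n • s) x) (f (rep ((n + p + 1) • s)) x)]

/-- Add to `m` enough copies of each element `s'` of a finite net for its multiples to have become
almost periodic: completing `s'` to a whole period is then a return to `m`. -/
lemma exists_uniform_return (hX : TotallyBounded (Set.univ : Set X))
    (hadd : ∀ s t x, f (s + t) x = f t (f s x)) (hf : ∀ s, LipschitzWith 1 (f s)) (hε : 0 < ε) :
    ∃ m, ∃ F : Finset A, ∀ s, ∃ r ∈ F, ∀ x, dist (f (m + s + r) x) (f m x) < ε := by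
  classical
  obtain ⟨t, ht⟩ := exists_finite_uniform_net hX hX
    (LipschitzWith.uniformEquicontinuous f 1 hf) (half_pos hε)
  choose n p hper using exists_period hX hf (half_pos hε)
  refine ⟨∑ s ∈ t, n s • s, t.image fun s => p s • s, fun s => ?_⟩
  obtain ⟨s', hs', hss'⟩ := ht s
  refine ⟨p s' • s', Finset.mem_image_of_mem _ hs', fun x => ?_⟩
  rw [← Finset.add_sum_erase t _ hs']
  set u := ∑ s ∈ t.erase s', n s • s
  have hswap : n s' • s' + u + s + p s' • s' = (u + (n s' • s' + p s' • s')) + s := by abel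
  have hperiod : (u + (n s' • s' + p s' • s')) + s' = u + (n s' + (p s' + 1)) • s' := by
    rw [add_nsmul, add_nsmul, one_nsmul]; abel
  calc dist (f (n s' • s' + u + s + p s' • s') x) (f (n s' • s' + u) x)
      ≤ dist (f (u + (n s' • s' + p s' • s') + s) x) (f (u + (n s' • s' + p s' • s') + s') x) +
        dist (f (u + (n s' + (p s' + 1)) • s') x) (f (u + n s' • s') x) := by
        rw [hswap, add_comm (n s' • s') u, ← hperiod]
        exact dist_triangle _ _ _
    _ < ε / 2 + ε / 2 := by
        simp only [hadd _ s, hadd _ s', hadd u]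
        exact add_lt_add (hss' _) (hper s' _)
    _ = ε := add_halves ε

end Recurrence

section Visits

variable {I : Type*} [DecidableEq I] {b : ℕ → I} {i : I}

/-- The number of times, possibly infinite, that a strategy uses a given action. -/
def visits (b : ℕ → I) (i : I) : ℕ∞ := ⨆ t, ((used b t).count i : ℕ∞)

lemma count_used_le_visits (b : ℕ → I) (t : ℕ) (i : I) : ((used b t).count i : ℕ∞) ≤ visits b i :=
  le_iSup (fun t => ((used b t).count i : ℕ∞)) t

lemma eventually_le_count_used {k : ℕ} (h : (k : ℕ∞) ≤ visits b i) :
    ∀ᶠ N in atTop, k ≤ (used b N).count i := by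
  obtain ⟨N, hN⟩ : ∃ N, k ≤ (used b N).count i := by
    cases k with
    | zero => exact ⟨0, Nat.zero_le _⟩
    | succ k =>
      obtain ⟨N, hN⟩ := lt_iSup_iff.1 ((Nat.cast_lt.2 k.lt_succ_self).trans_le h)
      exact ⟨N, Nat.cast_lt.1 hN⟩
  filter_upwards [eventually_ge_atTop N] with N' hN'
  exact hN.trans (Multiset.count_le_of_le i (used_mono b hN'))

lemma eventually_count_used_eq_visits (h : visits b i ≠ ⊤) :
    ∀ᶠ N in atTop, ((used b N).count i : ℕ∞) = visits b i := by
  lift visits b i to ℕ using h with k hk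
  filter_upwards [eventually_le_count_used hk.le] with N hN
  exact le_antisymm (hk ▸ count_used_le_visits b N i) (Nat.cast_le.2 hN)

end Visits

section Concatenation

variable {X I : Type*} {q : X → I → X} {g : X → I → ℝ}

lemma exists_switching_times {w u K : ℕ → ℝ} (hwu : ∀ k, w (k + 1) < u k) (L : ℕ → ℕ) :
    ∃ T : ℕ → ℕ, T 0 = 0 ∧ StrictMono T ∧ ∀ k, ∃ l, L k ≤ l ∧ T (k + 1) = T k + l ∧
      T (k + 1) * w (k + 1) + K (k + 1) ≤ T k * w k + l * u k := by
  have hlong (k τ : ℕ) : ∃ l, L k ≤ l ∧ 0 < l ∧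
      τ * (w (k + 1) - w k) + K (k + 1) ≤ l * (u k - w (k + 1)) :=
    ((eventually_ge_atTop (L k)).and ((eventually_gt_atTop 0).and
      ((tendsto_natCast_atTop_atTop.atTop_mul_const
        (sub_pos.2 (hwu k))).eventually_ge_atTop _))).exists
  choose l hL hpos hl using hlong
  let T : ℕ → ℕ := fun k => Nat.rec 0 (fun k τ => τ + l k τ) k
  refine ⟨T, rfl, strictMono_nat_of_lt_succ fun k => Nat.lt_add_of_pos_right (hpos k (T k)),
    fun k => ⟨l k (T k), hL k _, rfl, ?_⟩⟩
  have hT : T (k + 1) = T k + l k (T k) := rfl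
  rw [hT, Nat.cast_add]
  linarith [hl k (T k)]

variable {x : X} {P : ℕ → X → Prop} {w u K : ℕ → ℝ} {L : ℕ → ℕ}

lemma exists_strategy_through_switching_times (hP : P 0 x) (hw : Monotone w)
    (hwu : ∀ k, w k ≤ u k)
    (hstep : ∀ k y, P k y → ∃ c, Guarantees q g y c (u k) (K k) ∧
      ∀ n, L k ≤ n → P (k + 1) (play q y c n))
    {T : ℕ → ℕ} (hT₀ : T 0 = 0)
    (hT : ∀ k, ∃ l, L k ≤ l ∧ T (k + 1) = T k + l ∧
      T (k + 1) * w (k + 1) + K (k + 1) ≤ T k * w k + l * u k) (N : ℕ) :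
    ∃ A, P N (play q x A (T N)) ∧ T N * w N + K N - K 0 ≤ totalPayoff q g x A (T N) ∧
      ∀ k < N, ∀ n, T k ≤ n → n ≤ T N → n * w k - K 0 ≤ totalPayoff q g x A n := by
  induction N with
  | zero =>
    obtain ⟨c, -⟩ := hstep 0 x hP
    exact ⟨c, by simpa [hT₀, play], by simp [hT₀, totalPayoff],
      fun k hk => absurd hk k.not_lt_zero⟩
  | succ N ih =>
    obtain ⟨A, hPA, hend, hA⟩ := ih
    obtain ⟨l, hLl, hTl, hl⟩ := hT N
    obtain ⟨c, hc, hPc⟩ := hstep N _ hPA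
    refine ⟨concat (T N) A c, ?_, ?_, fun k hk n hkn hn => ?_⟩
    · rw [hTl, play_concat]
      exact hPc l hLl
    · rw [hTl, totalPayoff_concat, ← hTl]
      linarith [hc l]
    rcases le_or_gt (T N) n with hNn | hnN
    · obtain ⟨m, rfl⟩ := Nat.exists_eq_add_of_le hNn
      have hrate : ((T N + m : ℕ) : ℝ) * w k ≤ (T N + m : ℕ) * w N := by
        gcongr
        exact hw (Nat.le_of_lt_succ hk)
      have hblock : (m : ℝ) * w N ≤ m * u N := by
        gcongr
        exact hwu N
      rw [totalPayoff_concat]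
      push_cast at hrate ⊢
      linarith [hc m]
    · have hkN : k < N := (Nat.lt_succ_iff_lt_or_eq.1 hk).resolve_right fun h =>
        absurd hkn (h ▸ hnN.not_ge)
      rw [totalPayoff_congr fun t ht => concat_of_lt (ht.trans hnN)]
      exact hA k hkN n hkn hnN.le

lemma exists_strategy_forall_guarantees [Finite I] (hP : P 0 x) (hw : Monotone w)
    (hwu : ∀ k, w (k + 1) < u k)
    (hstep : ∀ k y, P k y → ∃ c, Guarantees q g y c (u k) (K k) ∧
      ∀ n, L k ≤ n → P (k + 1) (play q y c n)) :
    ∃ a, ∀ k, ∃ K', Guarantees q g x a (w k) K' := by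
  obtain ⟨T, hT₀, hTmono, hT⟩ := exists_switching_times (K := K) hwu L
  have hwu' (k : ℕ) : w k ≤ u k := (hw k.le_succ).trans (hwu k).le
  obtain ⟨a, ha⟩ := exists_strategy_of_forall_prefix
    (Q := fun n a => ∀ k, T k ≤ n → n * w k - K 0 ≤ totalPayoff q g x a n)
    (fun n a b hab ha k hk => by rw [← totalPayoff_congr hab]; exact ha k hk)
    fun N => by
      obtain ⟨A, -, -, hA⟩ :=
        exists_strategy_through_switching_times hP hw hwu' hstep hT₀ hT (N + 1)
      refine ⟨A, fun n hn k hk => hA k ?_ n hk ?_⟩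
      · exact Nat.lt_succ_of_le (((hTmono.le_apply).trans hk).trans hn)
      · exact (hn.trans N.le_succ).trans hTmono.le_apply
  exact ⟨a, fun k => Guarantees.exists_of_eventually <|
    (eventually_ge_atTop (T k)).mono fun n hn => ha n k hn⟩

end Concatenation

section Resumption

variable {I : Type*}

/-- The submonoid of multisets of actions drawn from `J`. -/
def multisetsOn (J : Set I) : AddSubmonoid (Multiset I) where
  carrier := {s | ∀ i ∈ s, i ∈ J}
  zero_mem' := by simp
  add_mem' hs ht i hi := (Multiset.mem_add.1 hi).elim (hs i) (ht i)

lemma count_eq_zero_of_mem_multisetsOn [DecidableEq I] {J : Set I} {s : Multiset I}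
    (hs : s ∈ multisetsOn J) {i : I} (hi : i ∉ J) : s.count i = 0 :=
  Multiset.count_eq_zero_of_notMem fun h => hi (hs i h)

variable {X : Type*} [PseudoMetricSpace X] [Finite I] [DecidableEq I] {q : X → I → X}
  {g : X → I → ℝ} {x : X} {w w' : ℝ}

lemma exists_large_used (b : ℕ → I) {m : Multiset I} (hm : m ∈ multisetsOn {i | visits b i = ⊤}) :
    ∃ N, m ≤ used b N ∧ ∀ i, visits b i ≠ ⊤ → ((used b N).count i : ℕ∞) = visits b i := by
  have hcover (i : I) : ∀ᶠ N in atTop, m.count i ≤ (used b N).count i := by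
    refine eventually_le_count_used ?_
    by_cases hi : visits b i = ⊤
    · exact hi ▸ le_top
    · simp [count_eq_zero_of_mem_multisetsOn hm hi]
  have hexhaust (i : I) :
      ∀ᶠ N in atTop, visits b i ≠ ⊤ → ((used b N).count i : ℕ∞) = visits b i := by
    by_cases hi : visits b i = ⊤
    · simp [hi]
    · exact (eventually_count_used_eq_visits hi).mono fun _ h _ => h
  obtain ⟨N, hmN, hN⟩ := ((eventually_all.2 hcover).and (eventually_all.2 hexhaust)).exists
  exact ⟨N, Multiset.le_iff_count.2 hmN, hN⟩

/-- From the state reached by `M`, play the actions of `used b N` that `M` lacks among those `b`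
uses finitely often, together with a return `r` compensating the other actions of `M`: by
commutativity this leads close to the state of `b` at time `N`. -/
lemma exists_multiset_dist_play_lt [RightCommutative q] (hX : TotallyBounded (Set.univ : Set X))
    (hLip : ∀ i, LipschitzWith 1 fun x => q x i) (x : X) (b : ℕ → I) {δ : ℝ} (hδ : 0 < δ) :
    ∃ N R : ℕ, ∀ M : Multiset I, (∀ i, (M.count i : ℕ∞) ≤ visits b i) → ∃ E : Multiset I,
      E.card ≤ R ∧ dist ((M + E).foldl q x) (play q x b N) < δ ∧
      ∀ i, visits b i ≠ ⊤ → (M + E).count i = (used b N).count i := by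
  classical
  set J : Set I := {i | visits b i = ⊤}
  obtain ⟨⟨m, hm⟩, F, hF⟩ := exists_uniform_return (A := multisetsOn J) hX
    (f := fun s x => s.1.foldl q x) (fun s t x => Multiset.foldl_add q x s.1 t.1)
    (fun s => lipschitzWith_foldl hLip s.1) hδ
  obtain ⟨N, hmN, hN⟩ := exists_large_used b hm
  obtain ⟨d, hd⟩ := Multiset.le_iff_exists_add.1 hmN
  refine ⟨N, F.sup (fun r => r.1.card) + N, fun M hM => ?_⟩
  set s := M.filter (· ∈ J)
  set ζ := M.filter (· ∉ J)
  have hsM : s + ζ = M := Multiset.filter_add_not _ _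
  have hs : s ∈ multisetsOn J := fun i hi => (Multiset.mem_filter.1 hi).2
  have hζN : ζ ≤ used b N := Multiset.le_iff_count.2 fun i => by
    rw [Multiset.count_filter]
    split_ifs with hi
    · exact Nat.zero_le _
    · exact Nat.cast_le.1 ((hM i).trans (hN i hi).ge)
  obtain ⟨e, he⟩ := Multiset.le_iff_exists_add.1 hζN
  obtain ⟨⟨r, hr⟩, hrF, hreturn⟩ := hF ⟨s, hs⟩
  have hME : M + (r + e) = s + r + used b N := by rw [he, ← hsM]; abel
  refine ⟨r + e, ?_, ?_, fun i hi => ?_⟩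
  · have hcard : e.card ≤ N := by
      have heN : e ≤ used b N := he ▸ Multiset.le_add_left e ζ
      simpa [used] using Multiset.card_le_card heN
    rw [Multiset.card_add]
    exact add_le_add (Finset.le_sup (f := fun r => r.1.card) hrF) hcard
  · have hreorder : s + r + (m + d) = d + (m + s + r) := by abel
    rw [hME, play_eq_foldl_used, hd, hreorder, add_comm m d, Multiset.foldl_add,
      Multiset.foldl_add _ _ d m]
    exact hreturn _
  · rw [hME, Multiset.count_add, Multiset.count_add, count_eq_zero_of_mem_multisetsOn hs hi,
      count_eq_zero_of_mem_multisetsOn hr hi, zero_add, zero_add]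

lemma Guarantees.exists_resume [RightCommutative q] (hX : TotallyBounded (Set.univ : Set X))
    (hLip : ∀ i, LipschitzWith 1 fun x => q x i) (hgu : ∀ i, UniformContinuous fun x => g x i)
    {b : ℕ → I} {K₀ : ℝ} (hb : Guarantees q g x b w K₀) (hw : w' < w) :
    ∃ (K : ℝ) (L : ℕ), ∀ M : Multiset I, (∀ i, (M.count i : ℕ∞) ≤ visits b i) →
      ∃ c, Guarantees q g (M.foldl q x) c w' K ∧
        ∀ n, L ≤ n → ∀ i, ((M + used c n).count i : ℕ∞) ≤ visits b i := by
  obtain ⟨B, hg⟩ := exists_forall_abs_le hX hgu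
  obtain ⟨δ, hδ, hclose⟩ := exists_pos_totalPayoff_sub_le hLip hgu (sub_pos.2 hw)
  obtain ⟨N, R, hNR⟩ := exists_multiset_dist_play_lt hX hLip x b hδ
  have hB : 0 ≤ B + |w'| := add_nonneg ((abs_nonneg _).trans (hg x (b 0))) (abs_nonneg w')
  refine ⟨K₀ + N * (B + |w|) + R * (B + |w'|), R, fun M hM => ?_⟩
  obtain ⟨E, hER, hdist, hcount⟩ := hNR M hM
  have : Nonempty I := ⟨b 0⟩
  obtain ⟨A, hA⟩ := exists_used_card_eq E
  have hplay : play q (M.foldl q x) A E.card = (M + E).foldl q x := by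
    rw [play_eq_foldl_used, hA, Multiset.foldl_add]
  refine ⟨concat E.card A fun t => b (N + t), ?_, fun n hn i => ?_⟩
  · have hnear : Guarantees q g (play q (M.foldl q x) A E.card) (fun t => b (N + t)) w'
        (K₀ + N * (B + |w|)) := fun n => by
      rw [hplay]
      linarith [hb.tail hg N n, hclose _ _ hdist (fun t => b (N + t)) n]
    exact (hnear.of_play hg).mono le_rfl (by gcongr)
  · obtain ⟨k, rfl⟩ := Nat.exists_eq_add_of_le (hER.trans hn)
    by_cases hi : visits b i = ⊤
    · exact hi ▸ le_top
    · rw [used_concat, hA, ← add_assoc, Multiset.count_add, hcount i hi, ← Multiset.count_add,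
        ← used_add]
      exact count_used_le_visits b (N + k) i

end Resumption

section UniformValue

variable {X I : Type*} {q : X → I → X} {g : X → I → ℝ} {x : X} {v w B : ℝ}

/-- By Dickson's lemma the visit profiles of increasingly good strategies may be assumed monotone.
Resuming the `k`-th strategy leaves every action used at most as often as its profile allows,
hence allows one to resume the next strategy. -/
theorem exists_strategy_forall_lt_guarantees [PseudoMetricSpace X] [Finite I]
    [RightCommutative q] (hX : TotallyBounded (Set.univ : Set X))
    (hLip : ∀ i, LipschitzWith 1 fun x => q x i) (hgu : ∀ i, UniformContinuous fun x => g x i)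
    (h : ∀ w < v, ∃ b K, Guarantees q g x b w K) :
    ∃ a, ∀ w < v, ∃ K, Guarantees q g x a w K := by
  classical
  obtain ⟨w, hw, hwv, hlim⟩ := exists_seq_strictMono_tendsto v
  choose b K₀ hb using fun k => h (w (k + 3)) (hwv _)
  obtain ⟨φ, hφ⟩ := wellQuasiOrdered_le.exists_monotone_subseq fun k => visits (b k)
  choose K L hresume using fun k => (hb (φ k)).exists_resume hX hLip hgu (w' := w (k + 2))
    (hw (by have := φ.strictMono.le_apply (x := k); omega))
  let P (k : ℕ) (y : X) : Prop :=
    ∃ M : Multiset I, M.foldl q x = y ∧ ∀ i, (M.count i : ℕ∞) ≤ visits (b (φ k)) i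
  have hstep (k : ℕ) (y : X) (hy : P k y) : ∃ c, Guarantees q g y c (w (k + 2)) (K k) ∧
      ∀ n, L k ≤ n → P (k + 1) (play q y c n) := by
    obtain ⟨M, rfl, hM⟩ := hy
    obtain ⟨c, hc, hused⟩ := hresume k M hM
    exact ⟨c, hc, fun n hn => ⟨M + used c n, by rw [play_eq_foldl_used, Multiset.foldl_add],
      fun i => (hused n hn i).trans (hφ k (k + 1) k.le_succ i)⟩⟩
  obtain ⟨a, ha⟩ := exists_strategy_forall_guarantees (P := P) (x := x) ⟨0, rfl, by simp⟩
    hw.monotone (fun k => hw (k + 1).lt_succ_self) hstep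
  refine ⟨a, fun w' hw' => ?_⟩
  obtain ⟨k, hk⟩ := (hlim.eventually_const_lt hw').exists
  obtain ⟨K', hK'⟩ := ha k
  exact ⟨K', hK'.mono hk.le le_rfl⟩

lemma abs_payoff_le (hg : ∀ x i, |g x i| ≤ B) (x : X) (a : ℕ → I) (n : ℕ) :
    |payoff q g x a n| ≤ B := by
  rw [payoff_eq_totalPayoff_div, abs_div, Nat.abs_cast]
  exact div_le_of_le_mul₀ n.cast_nonneg ((abs_nonneg _).trans (hg x (a 0)))
    ((abs_totalPayoff_le hg x a n).trans_eq (mul_comm _ _))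

lemma payoff_le_nValue (hg : ∀ x i, |g x i| ≤ B) (x : X) (a : ℕ → I) (n : ℕ) :
    payoff q g x a n ≤ nValue q g x n :=
  le_ciSup (f := fun a => payoff q g x a n)
    ⟨B, Set.forall_mem_range.2 fun a => (abs_le.1 (abs_payoff_le hg x a n)).2⟩ a

lemma abs_nValue_le [Nonempty I] (hg : ∀ x i, |g x i| ≤ B) (x : X) (n : ℕ) : |nValue q g x n| ≤ B :=
  abs_le.2 ⟨(abs_le.1 (abs_payoff_le hg x (fun _ => Classical.arbitrary I) n)).1.trans
    (payoff_le_nValue hg x _ n), ciSup_le fun a => (abs_le.1 (abs_payoff_le hg x a n)).2⟩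

lemma frequently_exists_lt_payoff [Nonempty I] (hg : ∀ x i, |g x i| ≤ B)
    (hw : w < limsup (fun n => nValue q g x n) atTop) :
    ∃ᶠ n in atTop, ∃ a : ℕ → I, w < payoff q g x a n :=
  have hbdd : IsBoundedUnder (· ≥ ·) atTop fun n => nValue q g x n :=
    isBoundedUnder_of ⟨-B, fun n => (abs_le.1 (abs_nValue_le hg x n)).1⟩
  (frequently_lt_of_lt_limsup hbdd.isCoboundedUnder_le hw).mono fun _ hn => exists_lt_of_lt_ciSup hn

lemma eventually_payoff_lt (hg : ∀ x i, |g x i| ≤ B) (a : ℕ → I)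
    (hw : limsup (fun n => nValue q g x n) atTop < w) :
    ∀ᶠ n in atTop, payoff q g x a n < w :=
  have : Nonempty I := ⟨a 0⟩
  have hbdd : IsBoundedUnder (· ≤ ·) atTop fun n => nValue q g x n :=
    isBoundedUnder_of ⟨B, fun n => (abs_le.1 (abs_nValue_le hg x n)).2⟩
  (eventually_lt_of_limsup_lt hw hbdd).mono fun n hn => (payoff_le_nValue hg x a n).trans_lt hn

end UniformValue

theorem exists_uniform_value_and_pure_zero_optimal_general
    {X I : Type*} [PseudoMetricSpace X] [Finite I] [Nonempty I]
    (hX : TotallyBounded (Set.univ : Set X))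
    (q : X → I → X) (g : X → I → ℝ)
    (hcomm : ∀ x i i', q (q x i) i' = q (q x i') i)
    (hLip : ∀ i, LipschitzWith 1 (fun x => q x i))
    (hgu : ∀ i, UniformContinuous (fun x => g x i))
    (x₁ : X) :
    ∃ (v : ℝ) (a : ℕ → I),
      limsup (fun n => nValue q g x₁ n) atTop ≤ v ∧
      Tendsto (fun n => payoff q g x₁ a n) atTop (𝓝 v) := by
  have : RightCommutative q := ⟨hcomm⟩
  obtain ⟨B, hg⟩ := exists_forall_abs_le hX hgu
  obtain ⟨a, ha⟩ := exists_strategy_forall_lt_guarantees (q := q) (x := x₁)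
    (v := limsup (fun n => nValue q g x₁ n) atTop) hX hLip hgu fun w hw => by
      obtain ⟨u, hwu, hu⟩ := exists_between hw
      exact exists_guarantees_of_frequently_lt_payoff hX hLip hgu hwu
        (frequently_exists_lt_payoff hg hu)
  refine ⟨_, a, le_rfl, tendsto_order.2 ⟨fun w hw => ?_, fun w hw => eventually_payoff_lt hg a hw⟩⟩
  obtain ⟨u, hwu, hu⟩ := exists_between hw
  obtain ⟨K, hK⟩ := ha u hu
  exact hK.eventually_lt_payoff hwu

/-- In a precompact metric space with a `1`-Lipschitz deterministic commutative transition and a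
uniformly continuous payoff, the MDP starting at any state has a uniform value in pure
strategies, and there is a pure `0`-optimal strategy. -/
theorem exists_uniform_value_and_pure_zero_optimal
    {X I : Type*} [MetricSpace X] [Fintype I] [Nonempty I]
    (hX : TotallyBounded (Set.univ : Set X))
    (q : X → I → X) (g : X → I → ℝ)
    (hg : ∀ x i, g x i ∈ Set.Icc (0 : ℝ) 1)
    (hcomm : ∀ x i i', q (q x i) i' = q (q x i') i)
    (hLip : ∀ i, LipschitzWith 1 (fun x => q x i))
    (hgu : ∀ i, UniformContinuous (fun x => g x i))
    (x₁ : X) :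
    ∃ (v : ℝ) (a : ℕ → I),
      limsup (fun n => nValue q g x₁ n) atTop ≤ v ∧
      Tendsto (fun n => payoff q g x₁ a n) atTop (𝓝 v) :=
  exists_uniform_value_and_pure_zero_optimal_general hX q g hcomm hLip hgu x₁
end
end

section
/- Let X, A and (Q_a)_{a ∈ A} be a commuting 1-Lipschitz family on a compact subset of ℝ^m with the ℓ¹ norm. Then there exists a state x ∈ X at which every element of A is cyclic: for every a ∈ A there exists an integer d ≥ 1 with Q_a^{(d)}(x) = x. -/
open Filter Topology

noncomputable section

/-- `a` is cyclic at `x` for the family `Q`: some positive iterate of `Q a` fixes `x`. -/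
def Cyclic {X A : Type*} (Q : A → X → X) (a : A) (x : X) : Prop :=
  ∃ d : ℕ, 1 ≤ d ∧ (Q a)^[d] x = x

/-- The set of elements of `A` that are cyclic at `x`. -/
def cyclicSet {X A : Type*} (Q : A → X → X) (x : X) : Set A :=
  {a : A | Cyclic Q a x}

/-- `y` is reachable from `x`: `y` is obtained from `x` by applying finitely many of the maps. -/
def Reachable {X A : Type*} (Q : A → X → X) (x y : X) : Prop :=
  ∃ l : List A, y = l.foldr (fun a z => Q a z) x

/-!
Let `Y` be a minimal nonempty closed set invariant under all the maps. Commutation makes each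
`Q a '' Y` invariant, so each `Q a` maps `Y` onto itself and is, by compactness, an isometry of `Y`.
It remains to see that an isometry `q` of a compact space whose metric is the maximum of the
differences of finitely many functions has only finite orbits.

The distance on an orbit turns `ℤ` into a seminormed group, whose completion `G` embeds
isometrically in the space and is hence compact. Say that a function `f i` norms a pair `(x, y)` if
`f i x - f i y = ‖x - y‖`. If `‖k + h‖ < ‖k‖ + ‖h‖` and `f i` norms `(x + k, x)`, then `f i` cannot
norm `(x, x - h)`. First, this bounds the length of chains of group elements lying in succession on
a geodesic issued from `0`; so, if `G` is not discrete, there are arbitrarily small `g ≠ 0` with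
`‖g + h‖ < ‖g‖ + ‖h‖` for all small `h ≠ 0`. Second, if `V` is open, such a `g` yields an open
subset of `V` and an `i` with `f i` norming all the pairs `(x + g, x)` there, and then `f i` can be
discarded on a smaller open set. Discarding all the functions in turn is absurd, so `G` is discrete,
hence finite.
-/

section Geodesic

variable {G : Type*} [SeminormedAddCommGroup G]

/-- The geodesic order of a normed group: `x` lies on a geodesic from `0` to `g`, in the metric
sense of equality in the triangle inequality. -/
def GeodesicLE (x g : G) : Prop :=
  ‖x‖ + ‖g - x‖ = ‖g‖

lemma GeodesicLE.refl (g : G) : GeodesicLE g g := by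
  simp [GeodesicLE]

lemma GeodesicLE.trans {x g k : G} (hxg : GeodesicLE x g) (hgk : GeodesicLE g k) :
    GeodesicLE x k := by
  unfold GeodesicLE at *
  have h₁ := norm_le_norm_add_norm_sub' k x
  have h₂ := norm_sub_le_norm_sub_add_norm_sub k g x
  linarith

lemma GeodesicLE.sub_left {x g : G} (h : GeodesicLE x g) : GeodesicLE (g - x) g := by
  unfold GeodesicLE at *
  rw [sub_sub_cancel, add_comm, h]

lemma geodesicLE_add_of_norm_add_le {g h : G} (hgh : ‖g‖ + ‖h‖ ≤ ‖g + h‖) :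
    GeodesicLE g (g + h) := by
  unfold GeodesicLE
  rw [add_sub_cancel_left]
  exact hgh.antisymm (norm_add_le g h)

lemma norm_sub_le_of_geodesicLE {f : G → ℝ} (hf : LipschitzWith 1 f) {x y k : G}
    (hle : GeodesicLE (x - y) k) (hk : f (y + k) - f y = ‖k‖) : ‖x - y‖ ≤ f x - f y := by
  have h : f (y + k) ≤ f x + dist (y + k) x := by simpa using hf.le_add_mul (y + k) x
  rw [dist_eq_norm, show y + k - x = k - (x - y) by abel] at h
  unfold GeodesicLE at hle
  linarith

lemma sub_lt_norm_of_norm_add_lt {f : G → ℝ} (hf : LipschitzWith 1 f) {x y k : G}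
    (hlt : ‖k + (x - y)‖ < ‖k‖ + ‖x - y‖) (hk : f (x + k) - f x = ‖k‖) :
    f x - f y < ‖x - y‖ := by
  have h : f (x + k) ≤ f y + dist (x + k) y := by simpa using hf.le_add_mul (x + k) y
  rw [dist_eq_norm, show x + k - y = k + (x - y) by abel] at h
  linarith

end Geodesic

/-- A norming family of a metric space: the distance from `x` to `y` is the maximum of the
differences `f i x - f i y`. A finite such family amounts to an isometric embedding into a
polyhedral normed space. -/
structure IsNorming {X ι : Type*} [PseudoMetricSpace X] (f : ι → X → ℝ) : Prop where
  lipschitzWith : ∀ i, LipschitzWith 1 (f i)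
  exists_sub_eq_dist : ∀ x y, ∃ i, f i x - f i y = dist x y

lemma IsNorming.comp_isometry {X Z ι : Type*} [PseudoMetricSpace X] [PseudoMetricSpace Z]
    {f : ι → X → ℝ} (hf : IsNorming f) {φ : Z → X} (hφ : Isometry φ) :
    IsNorming fun i => f i ∘ φ where
  lipschitzWith i := by simpa using (hf.lipschitzWith i).comp hφ.lipschitz
  exists_sub_eq_dist x y := by simpa [hφ.dist_eq] using hf.exists_sub_eq_dist (φ x) (φ y)

/-- The functions `f i`, `i ∈ J`, norm the set `V`: they attain the distance between any two
distinct points of `V`. The points are required to be distinct so that removing functions from `J`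
remains meaningful; the pair `(y, x)` need not be normed by the same function as `(x, y)`. -/
def NormsOn {X ι : Type*} [PseudoMetricSpace X] (f : ι → X → ℝ) (J : Finset ι) (V : Set X) :
    Prop :=
  ∀ x ∈ V, ∀ y ∈ V, x ≠ y → ∃ i ∈ J, f i x - f i y = dist x y

lemma exists_nonempty_inter_interior_of_subset_biUnion {X ι : Type*} [TopologicalSpace X]
    {J : Finset ι} {F : ι → Set X} (hF : ∀ i ∈ J, IsClosed (F i)) {U : Set X} (hU : IsOpen U)
    (hne : U.Nonempty) (hUF : U ⊆ ⋃ i ∈ J, F i) : ∃ i ∈ J, (U ∩ interior (F i)).Nonempty := by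
  classical
  induction J using Finset.induction_on generalizing U with
  | empty => simp [hne.ne_empty] at hUF
  | insert a J _ ih =>
    rw [Finset.forall_mem_insert] at hF
    rw [Finset.set_biUnion_insert, ← Set.sdiff_subset_iff] at hUF
    rcases (U \ F a).eq_empty_or_nonempty with hempty | hdiff
    · have hUa : U ⊆ interior (F a) := interior_maximal (Set.sdiff_eq_empty.1 hempty) hU
      exact ⟨a, Finset.mem_insert_self a J, by rwa [Set.inter_eq_left.2 hUa]⟩
    · obtain ⟨i, hi, hUi⟩ := ih hF.2 (hU.sdiff hF.1) hdiff hUF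
      exact ⟨i, Finset.mem_insert_of_mem hi,
        hUi.mono (Set.inter_subset_inter_left _ Set.sdiff_subset)⟩

lemma exists_isOpen_normsOn_erase {G ι : Type*} [SeminormedAddCommGroup G] [DecidableEq ι]
    {f : ι → G → ℝ} (hf : ∀ i, LipschitzWith 1 (f i))
    (hstrict : ∃ᶠ g in 𝓝[≠] (0 : G), ∀ᶠ h in 𝓝[≠] (0 : G), ‖g + h‖ < ‖g‖ + ‖h‖)
    {J : Finset ι} {V : Set G} (hV : IsOpen V) (hne : V.Nonempty) (hJ : NormsOn f J V) :
    ∃ i ∈ J, ∃ W : Set G, IsOpen W ∧ W.Nonempty ∧ NormsOn f (J.erase i) W := by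
  obtain ⟨v, hv⟩ := hne
  have hvV : ∀ᶠ g in 𝓝[≠] (0 : G), g ≠ 0 ∧ v + g ∈ V := by
    have hcont : Tendsto (v + ·) (𝓝[≠] (0 : G)) (𝓝 v) :=
      ((continuous_const_add v).tendsto' 0 v (add_zero v)).mono_left nhdsWithin_le_nhds
    exact inter_mem self_mem_nhdsWithin (hcont (hV.mem_nhds hv))
  obtain ⟨g, hg, hg0, hvg⟩ := (hstrict.and_eventually hvV).exists
  let F : ι → Set G := fun i => {y | f i (y + g) - f i y = ‖g‖}
  have hF : ∀ i ∈ J, IsClosed (F i) := fun i _ => by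
    have := (hf i).continuous
    exact isClosed_eq (by fun_prop) continuous_const
  have hcover : V ∩ (· + g) ⁻¹' V ⊆ ⋃ i ∈ J, F i := fun y ⟨hy, hyg⟩ => by
    simpa [F] using hJ (y + g) hyg y hy (by simpa using hg0)
  obtain ⟨i, hi, w, ⟨hwV, -⟩, hwF⟩ := exists_nonempty_inter_interior_of_subset_biUnion hF
    (hV.inter (hV.preimage (continuous_add_const g))) ⟨v, hv, hvg⟩ hcover
  obtain ⟨δ, hδ, hgδ⟩ := Metric.eventually_nhds_iff.1 (eventually_nhdsWithin_iff.1 hg)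
  refine ⟨i, hi, V ∩ interior (F i) ∩ Metric.ball w (δ / 2),
    (hV.inter isOpen_interior).inter Metric.isOpen_ball,
    ⟨w, ⟨hwV, hwF⟩, Metric.mem_ball_self (half_pos hδ)⟩, ?_⟩
  rintro x ⟨⟨hxV, hxF⟩, hxδ⟩ y ⟨⟨hyV, -⟩, hyδ⟩ hxy
  obtain ⟨j, hj, hjxy⟩ := hJ x hxV y hyV hxy
  refine ⟨j, Finset.mem_erase.2 ⟨?_, hj⟩, hjxy⟩
  rintro rfl
  have hxyδ : dist (x - y) 0 < δ := by
    rw [dist_zero_right, ← dist_eq_norm]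
    linarith [dist_triangle_right x y w, Metric.mem_ball.1 hxδ, Metric.mem_ball.1 hyδ]
  have hxg : x ∈ F j := interior_subset hxF
  have hlt := sub_lt_norm_of_norm_add_lt (hf j) (hgδ hxyδ (sub_ne_zero.2 hxy)) hxg
  exact hlt.ne (hjxy.trans (dist_eq_norm x y))

section NormedGroup

variable {G ι : Type*} [NormedAddCommGroup G] {f : ι → G → ℝ}

lemma GeodesicLE.norm_lt {x g : G} (h : GeodesicLE x g) (hne : g ≠ x) : ‖x‖ < ‖g‖ := by
  have hpos : 0 < ‖g - x‖ := norm_pos_iff.2 (sub_ne_zero.2 hne)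
  unfold GeodesicLE at h
  linarith

lemma exists_geodesicLE_forall_norm_add_lt [CompactSpace G] (g : G) :
    ∃ k, GeodesicLE g k ∧ ∀ h ≠ 0, ‖k + h‖ < ‖k‖ + ‖h‖ := by
  have hclosed : IsClosed {k : G | GeodesicLE g k} :=
    isClosed_eq (by fun_prop) (by fun_prop)
  obtain ⟨k, hgk, hmax⟩ :=
    hclosed.isCompact.exists_isMaxOn ⟨g, GeodesicLE.refl g⟩ continuous_norm.continuousOn
  refine ⟨k, hgk, fun h hh => ?_⟩
  by_contra! hadd
  have hkh : GeodesicLE k (k + h) := geodesicLE_add_of_norm_add_le hadd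
  exact (hkh.norm_lt (by simpa using hh)).not_ge (hmax (hgk.trans hkh))

lemma wellFounded_geodesicLE_gt [CompactSpace G] [Finite ι] (hf : IsNorming f) :
    WellFounded fun x y : G => GeodesicLE y x ∧ x ≠ y := by
  have := Fintype.ofFinite ι
  refine wellFounded_iff_isEmpty_descending_chain.2 ⟨fun ⟨u, hu⟩ => ?_⟩
  have hle : ∀ {m n}, m ≤ n → GeodesicLE (u m) (u n) := fun hmn =>
    Nat.le_induction (GeodesicLE.refl _) (fun n _ ih => ih.trans (hu n).1) _ hmn
  have hne : ∀ {m n}, m ≠ n → u m ≠ u n := fun hmn h =>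
    hmn <| (strictMono_nat_of_lt_succ fun n => (hu n).1.norm_lt (hu n).2).injective (congrArg _ h)
  obtain ⟨k, huk, hk⟩ := exists_geodesicLE_forall_norm_add_lt (u (Fintype.card ι))
  have hnormed : ∀ n, ∃ i, f i (-u n + k) - f i (-u n) = ‖k‖ := fun n => by
    simpa using hf.exists_sub_eq_dist (-u n + k) (-u n)
  choose c hc using hnormed
  obtain ⟨m, n, hmn, hcmn⟩ : ∃ m n : Fin (Fintype.card ι + 1), m < n ∧ c m = c n := by
    obtain ⟨m, n, hmn, hcmn⟩ := Fintype.exists_ne_map_eq_of_card_lt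
      (fun n : Fin (Fintype.card ι + 1) => c n) (by simp)
    rcases hmn.lt_or_gt with h | h
    exacts [⟨m, n, h, hcmn⟩, ⟨n, m, h, hcmn.symm⟩]
  have hdiff : -u m - -u n = u n - u m := by abel
  have hle_norm : GeodesicLE (-u m - -u n) k := by
    rw [hdiff]
    exact (hle hmn.le).sub_left.trans <| (hle (Nat.lt_succ_iff.1 n.2)).trans huk
  have hne_zero : -u m - -u n ≠ 0 := by
    simpa [hdiff, sub_eq_zero] using hne (Fin.val_ne_of_ne hmn.ne')
  exact (norm_sub_le_of_geodesicLE (hf.lipschitzWith _) hle_norm (hc n)).not_gt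
    (sub_lt_norm_of_norm_add_lt (hf.lipschitzWith _) (hk _ hne_zero) (hcmn ▸ hc m))

lemma frequently_eventually_norm_add_lt [CompactSpace G] [Finite ι] [(𝓝[≠] (0 : G)).NeBot]
    (hf : IsNorming f) :
    ∃ᶠ g in 𝓝[≠] (0 : G), ∀ᶠ h in 𝓝[≠] (0 : G), ‖g + h‖ < ‖g‖ + ‖h‖ := by
  refine Metric.nhdsWithin_basis_ball.frequently_iff.2 fun {r} hr => ?_
  obtain ⟨g, hg, hmax⟩ := (wellFounded_geodesicLE_gt hf).has_min
    (Metric.ball 0 r ∩ {0}ᶜ) (nonempty_of_mem (Metric.nhdsWithin_basis_ball.mem_of_mem hr))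
  refine ⟨g, hg, ?_⟩
  have hgr : ‖g‖ < r := mem_ball_zero_iff.1 hg.1
  filter_upwards [self_mem_nhdsWithin,
    mem_nhdsWithin_of_mem_nhds (Metric.ball_mem_nhds 0 (sub_pos.2 hgr))] with h hh0 hhr
  by_contra! hadd
  have hgh : GeodesicLE g (g + h) := geodesicLE_add_of_norm_add_le hadd
  have hne : g + h ≠ g := by simpa using hh0
  refine hmax (g + h) ⟨?_, ?_⟩ ⟨hgh, hne⟩
  · rw [mem_ball_zero_iff] at hhr ⊢
    linarith [norm_add_le g h]
  · exact norm_pos_iff.1 ((norm_nonneg g).trans_lt (hgh.norm_lt hne))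

theorem finite_of_isNorming [CompactSpace G] [Finite ι] (hf : IsNorming f) : Finite G := by
  classical
  suffices DiscreteTopology G from finite_of_compact_of_discrete
  refine discreteTopology_of_isOpen_singleton_zero ?_
  by_contra hzero
  have : (𝓝[≠] (0 : G)).NeBot := ⟨fun h => hzero ((isOpen_singleton_iff_punctured_nhds 0).2 h)⟩
  have hstrict := frequently_eventually_norm_add_lt hf
  have habsurd : ∀ (J : Finset ι) (V : Set G), IsOpen V → V.Nonempty → ¬NormsOn f J V := by
    intro J
    induction J using Finset.strongInduction with
    | H J ih =>
      intro V hV hne hJ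
      obtain ⟨i, hi, W, hW, hWne, hJW⟩ :=
        exists_isOpen_normsOn_erase hf.lipschitzWith hstrict hV hne hJ
      exact ih _ (Finset.erase_ssubset hi) W hW hWne hJW
  have := Fintype.ofFinite ι
  exact habsurd Finset.univ Set.univ isOpen_univ Set.univ_nonempty fun x _ y _ _ => by
    simpa using hf.exists_sub_eq_dist x y

end NormedGroup

section Isometry

variable {X : Type*}

lemma exists_lt_dist_lt [PseudoMetricSpace X] [CompactSpace X] (u : ℕ → X) {ε : ℝ} (hε : 0 < ε) :
    ∃ m n, m < n ∧ dist (u m) (u n) < ε := by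
  obtain ⟨x, φ, hφ, hlim⟩ := CompactSpace.tendsto_subseq u
  obtain ⟨N, hN⟩ := Metric.cauchySeq_iff.1 hlim.cauchySeq ε hε
  exact ⟨φ N, φ (N + 1), hφ N.lt_succ_self, hN N le_rfl (N + 1) N.le_succ⟩

/- A backward orbit of `x` comes back close to itself, and pushing it forward by iterates of `f`
shows that it comes back close to `f x`; do this simultaneously for `x` and `y`. -/
theorem isometry_of_lipschitzWith_one_of_surjective [PseudoMetricSpace X] [CompactSpace X]
    {f : X → X} (hf : LipschitzWith 1 f) (hsurj : f.Surjective) : Isometry f := by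
  have hdist : ∀ n x y, dist (f^[n] x) (f^[n] y) ≤ dist x y := fun n x y => by
    simpa using (hf.iterate n).dist_le_mul x y
  refine Isometry.of_dist_eq fun x y => (hdist 1 x y).antisymm ?_
  refine le_of_forall_pos_le_add fun ε hε => ?_
  obtain ⟨g, hg⟩ := hsurj.hasRightInverse
  obtain ⟨m, n, hmn, hclose⟩ := exists_lt_dist_lt (fun n => (g^[n] x, g^[n] y)) (half_pos hε)
  obtain ⟨k, rfl⟩ := Nat.exists_eq_add_of_lt hmn
  have hforward : ∀ z, f^[m + 1] (g^[m] z) = f z ∧ f^[m + 1] (g^[m + k + 1] z) = g^[k] z :=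
    fun z => by
      rw [Function.iterate_succ_apply', hg.iterate m, show m + k + 1 = m + 1 + k by ring,
        Function.iterate_add_apply g, hg.iterate (m + 1)]
      exact ⟨rfl, rfl⟩
  have hback : ∀ z, dist (g^[m] z) (g^[m + k + 1] z) < ε / 2 →
      dist (f z) (g^[k] z) < ε / 2 := fun z hz => by
    have h := hdist (m + 1) (g^[m] z) (g^[m + k + 1] z)
    rw [(hforward z).1, (hforward z).2] at h
    exact h.trans_lt hz
  obtain ⟨hx, hy⟩ := max_lt_iff.1 hclose
  calc dist x y = dist (f^[k] (g^[k] x)) (f^[k] (g^[k] y)) := by rw [hg.iterate k, hg.iterate k]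
    _ ≤ dist (g^[k] x) (g^[k] y) := hdist k _ _
    _ ≤ dist (f x) (f y) + (dist (f x) (g^[k] x) + dist (f y) (g^[k] y)) := by
      linarith [dist_triangle4 (g^[k] x) (f x) (f y) (g^[k] y), dist_comm (f x) (g^[k] x)]
    _ ≤ dist (f x) (f y) + ε := by linarith [hback x hx, hback y hy]

variable [MetricSpace X] [CompactSpace X] {ι : Type*} [Finite ι] {f : ι → X → ℝ}

theorem finite_range_of_dist_add_right {G : Type*} [AddCommGroup G] (hf : IsNorming f)
    {φ : G → X} (hφ : ∀ u v w, dist (φ (u + w)) (φ (v + w)) = dist (φ u) (φ v)) :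
    (Set.range φ).Finite := by
  let N : AddGroupSeminorm G :=
    { toFun := fun u => dist (φ u) (φ 0)
      map_zero' := dist_self _
      add_le' := fun u v => by
        have h := hφ u 0 v
        rw [zero_add] at h
        exact h ▸ dist_triangle _ (φ v) _
      neg' := fun u => by simpa [dist_comm] using (hφ (-u) 0 u).symm }
  let _ : SeminormedAddCommGroup G := N.toSeminormedAddCommGroup
  have hiso : Isometry φ := Isometry.of_dist_eq fun u v =>
    calc dist (φ u) (φ v) = dist (φ (u - v)) (φ 0) := by simpa using hφ (u - v) 0 v
      _ = dist u v := (dist_eq_norm u v).symm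
  have hΦ := hiso.completion_extension
  have : CompactSpace (UniformSpace.Completion G) := hΦ.isClosedEmbedding.compactSpace
  have : Finite (UniformSpace.Completion G) :=
    finite_of_isNorming (hf.comp_isometry hΦ)
  refine (Set.finite_range (UniformSpace.Completion.extension φ)).subset ?_
  rintro _ ⟨u, rfl⟩
  exact ⟨u, UniformSpace.Completion.extension_coe hiso.uniformContinuous u⟩

theorem mem_periodicPts_of_lipschitzWith_one_of_surjective (hf : IsNorming f)
    {q : X → X} (hq : LipschitzWith 1 q) (hsurj : q.Surjective) (x : X) :
    x ∈ Function.periodicPts q := by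
  have hiso := isometry_of_lipschitzWith_one_of_surjective hq hsurj
  let e : X ≃ᵢ X := ⟨Equiv.ofBijective q ⟨hiso.injective, hsurj⟩, hiso⟩
  have hpow : ∀ n : ℕ, (e ^ (n : ℤ)) x = q^[n] x := fun n => by
    induction n with
    | zero => rfl
    | succ n ih =>
      rw [Function.iterate_succ_apply', ← ih, Nat.cast_succ, add_comm, zpow_add, zpow_one]
      rfl
  have hfin : (Set.range fun n : ℤ => (e ^ n) x).Finite :=
    finite_range_of_dist_add_right hf fun u v w => by
      simp only [add_comm _ w, zpow_add, IsometryEquiv.mul_apply, IsometryEquiv.dist_eq]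
  have hmaps : Set.MapsTo (fun n => q^[n] x) Set.univ (Set.range fun n : ℤ => (e ^ n) x) :=
    fun n _ => ⟨n, hpow n⟩
  obtain ⟨m, -, n, -, hmn, heq⟩ := Set.infinite_univ.exists_lt_map_eq_of_mapsTo hmaps hfin
  refine ⟨n - m, Nat.sub_pos_of_lt hmn, hiso.injective.iterate m ?_⟩
  rw [← Function.iterate_add_apply, Nat.add_sub_cancel' hmn.le]
  exact heq.symm

end Isometry

lemma exists_isClosed_nonempty_forall_image_eq {X A : Type*} [TopologicalSpace X] [CompactSpace X]
    [T2Space X] [Nonempty X] {Q : A → X → X} (hcont : ∀ a, Continuous (Q a))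
    (hcomm : ∀ a b, Q a ∘ Q b = Q b ∘ Q a) :
    ∃ Y : Set X, IsClosed Y ∧ Y.Nonempty ∧ ∀ a, Q a '' Y = Y := by
  let S : Set (Set X) := {Y | IsClosed Y ∧ Y.Nonempty ∧ ∀ a, Set.MapsTo (Q a) Y Y}
  have hchain : ∀ c ⊆ S, IsChain (· ⊆ ·) c → c.Nonempty → ⋂₀ c ∈ S := fun c hcS hc hcne => by
    have := hcne.to_subtype
    have hdirected : DirectedOn (· ⊇ ·) c := IsChain.directedOn hc.symm
    refine ⟨isClosed_sInter fun Y hY => (hcS hY).1, ?_,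
      fun a x hx Y hY => (hcS hY).2.2 a (hx Y hY)⟩
    exact IsCompact.nonempty_sInter_of_directed_nonempty_isCompact_isClosed
      hdirected (fun Y hY => (hcS hY).2.1)
      (fun Y hY => (hcS hY).1.isCompact) fun Y hY => (hcS hY).1
  obtain ⟨Y, -, hmin⟩ := zorn_superset_nonempty S
    (fun c hcS hc hcne => ⟨⋂₀ c, hchain c hcS hc hcne, fun _ => Set.sInter_subset_of_mem⟩)
    Set.univ ⟨isClosed_univ, Set.univ_nonempty, fun a => Set.mapsTo_univ _ _⟩
  obtain ⟨hclosed, hne, hmaps⟩ := hmin.prop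
  refine ⟨Y, hclosed, hne, fun a => hmin.eq_of_subset ⟨?_, hne.image _, fun b => ?_⟩
    (hmaps a).image_subset⟩
  · exact (hclosed.isCompact.image (hcont a)).isClosed
  · rintro _ ⟨y, hy, rfl⟩
    exact ⟨Q b y, hmaps b hy, congrFun (hcomm a b) y⟩

theorem exists_state_all_cyclic_general {X A ι : Type*} [MetricSpace X] [CompactSpace X]
    [Nonempty X] [Finite ι] {f : ι → X → ℝ} (hf : IsNorming f) (Q : A → X → X)
    (hLip : ∀ a, LipschitzWith 1 (Q a)) (hcomm : ∀ a b, Q a ∘ Q b = Q b ∘ Q a) :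
    ∃ x : X, ∀ a : A, Cyclic Q a x := by
  obtain ⟨Y, hclosed, ⟨x, hx⟩, himage⟩ :=
    exists_isClosed_nonempty_forall_image_eq (fun a => (hLip a).continuous) hcomm
  have : CompactSpace Y := isCompact_iff_compactSpace.1 hclosed.isCompact
  refine ⟨x, fun a => ?_⟩
  have hmaps : Set.MapsTo (Q a) Y Y := Set.mapsTo_iff_image_subset.2 (himage a).subset
  have hsurj : (hmaps.restrict (Q a) Y Y).Surjective :=
    hmaps.restrict_surjective_iff.2 (himage a).superset
  have hLip_restrict : LipschitzWith 1 (hmaps.restrict (Q a) Y Y) := fun x y => hLip a x y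
  obtain ⟨d, hd, hper⟩ := mem_periodicPts_of_lipschitzWith_one_of_surjective
    (hf.comp_isometry isometry_subtype_coe) hLip_restrict hsurj ⟨x, hx⟩
  refine ⟨d, hd, ?_⟩
  simpa [hmaps.iterate_restrict] using congrArg Subtype.val hper

section SignFunctionals

variable {ι : Type*} [Fintype ι]

lemma sign_mul_le_abs (s : SignType) (t : ℝ) : s * t ≤ |t| := by
  cases s <;> simp [neg_le_abs, le_abs_self]

lemma dist_eq_sum_abs_sub (x y : PiLp 1 fun _ : ι => ℝ) : dist x y = ∑ i, |x i - y i| := by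
  simp [PiLp.dist_eq_of_L1, Real.dist_eq]

lemma isNorming_sum_sign_mul :
    IsNorming fun (s : ι → SignType) (x : PiLp 1 fun _ : ι => ℝ) => ∑ i, (s i : ℝ) * x i where
  lipschitzWith s := by
    refine LipschitzWith.of_le_add fun x y => ?_
    rw [dist_eq_sum_abs_sub, ← Finset.sum_add_distrib]
    exact Finset.sum_le_sum fun i _ => by linarith [sign_mul_le_abs (s i) (x i - y i)]
  exists_sub_eq_dist x y := by
    refine ⟨fun i => SignType.sign (x i - y i), ?_⟩
    simp only [dist_eq_sum_abs_sub, ← Finset.sum_sub_distrib, ← mul_sub, sign_mul_self]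

end SignFunctionals

/-- A commuting `1`-Lipschitz family on a nonempty compact subset of `ℝ^m` with the `ℓ¹` norm
admits a state at which every map of the family is cyclic. -/
theorem exists_state_all_cyclic
    {m : ℕ} {A : Type*} [Fintype A] [Nonempty A]
    (X : Set (PiLp 1 fun _ : Fin m => ℝ)) (hXne : X.Nonempty) (hXc : IsCompact X)
    (Q : A → X → X) (hLip : ∀ a, LipschitzWith 1 (Q a))
    (hcomm : ∀ a b, Q a ∘ Q b = Q b ∘ Q a) :
    ∃ x : X, ∀ a : A, Cyclic Q a x := by
  have : CompactSpace X := isCompact_iff_compactSpace.1 hXc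
  have : Nonempty X := hXne.to_subtype
  exact exists_state_all_cyclic_general
    (isNorming_sum_sign_mul.comp_isometry isometry_subtype_coe) Q hLip hcomm
end
end
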